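/- arXiv:2501.00102 — 2 statements merged into one kernel-verified Lean document; each statement's English description precedes it below -/
import Mathlib

section
/- Let D be a finite digraph on n > 1 vertices with diameter at most 2. Then there exists a vertex v such that either D − v is not strongly connected, or W(D − v) < W(D). -/
/-- A directed walk of length `n` from `u` to `v` along the arc relation `A`. -/
def DWalk {V : Type*} (A : V → V → Prop) : ℕ → V → V → Prop
  | 0, u, v => u = v
  | n+1, u, v => ∃ w, A u w ∧ DWalk A n w v

/-- Directed distance: length of a shortest directed path (`⊤` if none exists). -/
noncomputable def ddist {V : Type*} (A : V → V → Prop) (u v : V) : ℕ∞ :=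
  sInf {k : ℕ∞ | ∃ n : ℕ, k = n ∧ DWalk A n u v}

/-- Strong connectivity. -/
def StrongConn {V : Type*} (A : V → V → Prop) : Prop := ∀ u v, ∃ n, DWalk A n u v

/-- The induced subdigraph obtained by deleting vertex `v`. -/
def delRel {V : Type*} (A : V → V → Prop) (v : V) :
    {x : V // x ≠ v} → {x : V // x ≠ v} → Prop :=
  fun a b => A a.1 b.1

/-- Total distance (Wiener index): sum of distances over ordered pairs
(the diagonal contributes `0`). -/
noncomputable def wiener {V : Type*} [Fintype V] (A : V → V → Prop) : ℕ∞ :=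
  ∑ u, ∑ w, ddist A u w

open Classical in
/-- natural-number valued distance -/
noncomputable def dN {V : Type*} (A : V → V → Prop) (u v : V) : ℕ :=
  sInf {n | DWalk A n u v}

theorem dN_le {V : Type*} {A : V → V → Prop} {u v : V} {n : ℕ} (h : DWalk A n u v) :
    dN A u v ≤ n := Nat.sInf_le h

theorem dN_walk {V : Type*} {A : V → V → Prop} (hA : StrongConn A) (u v : V) :
    DWalk A (dN A u v) u v := by
  have : dN A u v ∈ {n | DWalk A n u v} := Nat.sInf_mem (hA u v)
  exact this

theorem ddist_eq {V : Type*} {A : V → V → Prop} (hA : StrongConn A) (u v : V) :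
    ddist A u v = (dN A u v : ℕ∞) := by
  apply le_antisymm
  · exact sInf_le ⟨_, rfl, dN_walk hA u v⟩
  · apply le_sInf
    rintro k ⟨n, rfl, hn⟩
    exact_mod_cast dN_le hn

theorem wiener_eq {V : Type*} [Fintype V] {A : V → V → Prop} (hA : StrongConn A) :
    wiener A = ((∑ u, ∑ w, dN A u w : ℕ) : ℕ∞) := by
  unfold wiener
  push_cast
  simp only [ddist_eq hA]

theorem DWalk.app {V : Type*} {A : V → V → Prop} {m n : ℕ} {u v w : V}
    (h : DWalk A m u v) (h' : DWalk A n v w) : DWalk A (m + n) u w := by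
  induction m generalizing u with
  | zero => cases h; simpa using h'
  | succ k ih =>
    obtain ⟨x, hx, hw⟩ := h
    have := ih hw
    rw [Nat.succ_add]
    exact ⟨x, hx, this⟩

theorem dN_tri {V : Type*} {A : V → V → Prop} (hA : StrongConn A) (u v w : V) :
    dN A u w ≤ dN A u v + dN A v w := dN_le ((dN_walk hA u v).app (dN_walk hA v w))

theorem dN_self {V : Type*} (A : V → V → Prop) (u : V) : dN A u u = 0 :=
  Nat.le_zero.1 (dN_le (rfl : DWalk A 0 u u))

theorem dN_one {V : Type*} {A : V → V → Prop} {u v : V} (h : A u v) : dN A u v ≤ 1 :=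
  dN_le (show DWalk A 1 u v from ⟨v, h, rfl⟩)

theorem dN_two {V : Type*} {A : V → V → Prop} {u v w : V} (h : A u v) (h' : A v w) :
    dN A u w ≤ 2 :=
  dN_le (show DWalk A 2 u w from ⟨v, h, w, h', rfl⟩)

theorem eq_of_dN {V : Type*} {A : V → V → Prop} (hA : StrongConn A) {u v : V}
    (h : dN A u v = 0) : u = v := by
  have := dN_walk hA u v
  rw [h] at this
  exact this

theorem adj_of_dN {V : Type*} {A : V → V → Prop} (hA : StrongConn A) {u v : V}
    (h : dN A u v = 1) : A u v := by
  have := dN_walk hA u v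
  rw [h] at this
  obtain ⟨w, hw, h2⟩ := this
  cases h2
  exact hw

theorem mid_of_dN {V : Type*} {A : V → V → Prop} (hA : StrongConn A) {u v : V}
    (h : dN A u v = 2) : ∃ w, A u w ∧ A w v := by
  have := dN_walk hA u v
  rw [h] at this
  obtain ⟨w, hw, x, h2, h3⟩ := this
  cases h3
  exact ⟨w, hw, h2⟩

/-- `a, b` at distance two, with no midpoint other than `u`. -/
def UM {V : Type*} (A : V → V → Prop) (u a b : V) : Prop :=
  a ≠ b ∧ ¬ A a b ∧ ∀ c, A a c → A c b → c = u

open Classical in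
/-- indicator of a pair of distinct vertices -/
noncomputable def eE {V : Type*} (a b : V) : ℕ := if a ≠ b then 1 else 0

open Classical in
/-- indicator of a nonadjacent pair of distinct vertices -/
noncomputable def eN {V : Type*} (A : V → V → Prop) (a b : V) : ℕ :=
  if a ≠ b ∧ ¬ A a b then 1 else 0

open Classical in
/-- indicator of `UM` -/
noncomputable def eF {V : Type*} (A : V → V → Prop) (u a b : V) : ℕ :=
  if UM A u a b then 1 else 0

theorem dN_eq {V : Type*} {A : V → V → Prop} (hirr : ∀ x, ¬ A x x) (hA : StrongConn A)
    (h2 : ∀ a b, dN A a b ≤ 2) (a b : V) : dN A a b = eE a b + eN A a b := by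
  unfold eE eN
  by_cases hab : a = b
  · subst hab; simp [dN_self]
  · have h0 : dN A a b ≠ 0 := fun h => hab (eq_of_dN hA h)
    by_cases hadj : A a b
    · have := dN_one hadj
      simp [hab, hadj]; omega
    · have h1 : dN A a b ≠ 1 := fun h => hadj (adj_of_dN hA h)
      have := h2 a b
      simp [hab, hadj]; omega

/-- distances in the vertex-deleted digraph -/
theorem um_of_three {V : Type*} {A : V → V → Prop} {u : V} {a b : {x : V // x ≠ u}}
    (h : 3 ≤ dN (delRel A u) a b) : UM A u a.1 b.1 := by
  refine ⟨?_, ?_, ?_⟩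
  · intro hab
    have := Subtype.ext hab
    subst this
    rw [dN_self] at h; omega
  · intro hab
    have := dN_one (A := delRel A u) (u := a) (v := b) hab
    omega
  · intro c h1 h2
    by_contra hc
    have := dN_two (A := delRel A u) (u := a) (v := ⟨c, hc⟩) (w := b) h1 h2
    omega

theorem um_mid {V : Type*} {A : V → V → Prop} (hA : StrongConn A)
    (h2 : ∀ a b, dN A a b ≤ 2) {u a b : V} (h : UM A u a b) : A a u ∧ A u b := by
  obtain ⟨hab, hn, hc⟩ := h
  have h0 : dN A a b ≠ 0 := fun h => hab (eq_of_dN hA h)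
  have h1 : dN A a b ≠ 1 := fun h => hn (adj_of_dN hA h)
  have h3 : dN A a b = 2 := by have := h2 a b; omega
  obtain ⟨c, h4, h5⟩ := mid_of_dN hA h3
  have := hc c h4 h5
  subst this
  exact ⟨h4, h5⟩

theorem avg {V : Type*} [Fintype V] {A : V → V → Prop} (hA : StrongConn A)
    (h2 : ∀ a b, dN A a b ≤ 2) (hirr : ∀ x, ¬ A x x) (harc : ∃ a b, A a b) :
    ∃ u, 4 * ∑ a, ∑ b, eF A u a b <
      ∑ x, (eE x u + eN A x u + (eE u x + eN A u x)) := by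
  by_contra! hcon
  have hs := Finset.sum_le_sum (fun u (_ : u ∈ Finset.univ) => hcon u)
  have e1 : ∑ u, ∑ x, (eE x u + eN A x u + (eE u x + eN A u x))
      = 2 * ∑ a, ∑ b, (eE a b + eN A a b) := by
    simp only [Finset.sum_add_distrib (f := fun x => eE x _ + eN A x _)]
    rw [Finset.sum_add_distrib, Finset.sum_comm]; ring
  have e2 : ∑ u, 4 * ∑ a, ∑ b, eF A u a b ≤ 4 * ∑ a, ∑ b, eN A a b := by
    rw [← Finset.mul_sum]
    apply Nat.mul_le_mul_left
    rw [Finset.sum_comm]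
    apply Finset.sum_le_sum
    intro a _
    rw [Finset.sum_comm]
    apply Finset.sum_le_sum
    intro b _
    by_cases hu : ∃ u, UM A u a b
    · obtain ⟨u, hu⟩ := hu
      have hN : eN A a b = 1 := by unfold eN; rw [if_pos ⟨hu.1, hu.2.1⟩]
      rw [hN, Finset.sum_eq_single u]
      · unfold eF; rw [if_pos hu]
      · intro w _ hw
        unfold eF
        rw [if_neg]
        intro hw'
        have := um_mid hA h2 hu
        exact hw (hw'.2.2 u this.1 this.2).symm
      · simp
    · push Not at hu
      rw [Finset.sum_eq_zero]
      · exact Nat.zero_le _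
      · intro w _
        unfold eF
        rw [if_neg (hu w)]
  have hNE : ∀ a b, eN A a b ≤ eE a b := by
    intro a b
    unfold eN eE
    split_ifs <;> simp_all
  have e3 : ∑ a : V, ∑ b : V, eN A a b < ∑ a : V, ∑ b : V, eE a b := by
    obtain ⟨a, b, hab⟩ := harc
    apply Finset.sum_lt_sum
    · intro a _; exact Finset.sum_le_sum (fun b _ => hNE a b)
    · refine ⟨a, Finset.mem_univ _, Finset.sum_lt_sum (fun b _ => hNE a b) ⟨b, Finset.mem_univ _, ?_⟩⟩
      have hne : a ≠ b := by rintro rfl; exact hirr _ hab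
      simp [eN, eE, hab, hne]
  have e4 : ∑ a : V, ∑ b : V, (eE a b + eN A a b) = ∑ a : V, ∑ b : V, eE a b + ∑ a : V, ∑ b : V, eN A a b := by
    simp only [Finset.sum_add_distrib]
  omega

theorem far {V : Type*} [Fintype V] [DecidableEq V] {A : V → V → Prop} (hA : StrongConn A)
    (h2 : ∀ a b, dN A a b ≤ 2) (u : V)
    (hu : StrongConn (delRel A u)) (a b : {x : V // x ≠ u})
    (h7 : 7 ≤ dN (delRel A u) a b) :
    ∑ x, (eE x u + eN A x u + (eE u x + eN A u x)) ≤ 4 * ∑ a, ∑ b, eF A u a b := by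
  classical
  set m := Fintype.card {x : V // x ≠ u} with hm
  have hcase : ∀ x, 4 ≤ dN (delRel A u) a x ∨ 4 ≤ dN (delRel A u) x b := by
    intro x
    have := dN_tri hu a x b
    omega
  -- at least four vertices
  have hm4 : 4 ≤ m := by
    have hw := dN_walk hu a b
    obtain ⟨k, hk⟩ : ∃ k, dN (delRel A u) a b = k + 2 := ⟨_, (Nat.sub_add_cancel (by omega)).symm⟩
    rw [hk] at hw
    obtain ⟨c, hac, e, hce, heb⟩ := hw
    have h1 := dN_tri hu a c b
    have h3 := dN_tri hu c e b
    have h4 := dN_one hac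
    have h5 := dN_one hce
    have h6 := dN_le heb
    have hs := dN_self (delRel A u) b
    have hcard : ({a, c, e, b} : Finset {x : V // x ≠ u}).card = 4 := by
      have n1 : a ≠ c := by rintro rfl; omega
      have n2 : a ≠ e := by rintro rfl; omega
      have n3 : a ≠ b := by rintro rfl; omega
      have n4 : c ≠ e := by rintro rfl; omega
      have n5 : c ≠ b := by rintro rfl; omega
      have n6 : e ≠ b := by rintro rfl; omega
      simp [n1, n2, n3, n4, n5, n6]
    rw [← hcard]
    exact Finset.card_le_univ _
  -- gain
  have hgain : ∑ x, (eE x u + eN A x u + (eE u x + eN A u x)) ≤ 3 * m := by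
    have : ∀ x, (eE x u + eN A x u + (eE u x + eN A u x)) ≤ if x ≠ u then 3 else 0 := by
      intro x
      by_cases hx : x = u
      · subst hx; simp [eE, eN]
      · have hx' : ¬ u = x := fun h => hx h.symm
        have hadj : A u x ∨ A x u := by
          rcases hcase ⟨x, hx⟩ with h | h
          · exact Or.inl (um_mid hA h2 (um_of_three (a := a) (b := ⟨x, hx⟩) (by omega))).2
          · exact Or.inr (um_mid hA h2 (um_of_three (a := ⟨x, hx⟩) (b := b) (by omega))).1
        unfold eE eN
        rcases hadj with h | h
        · simp [hx, hx', h]; split_ifs <;> simp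
        · simp [hx, hx', h]; split_ifs <;> simp
    refine (Finset.sum_le_sum (fun x _ => this x)).trans ?_
    rw [← Finset.sum_filter, Finset.sum_const, hm, Fintype.card_subtype]
    simp [mul_comm]
  -- many pairs
  have hF : m - 1 ≤ ∑ a, ∑ b, eF A u a b := by
    have e : ∑ a, ∑ b, eF A u a b
        = (Finset.univ.filter (fun p : V × V => UM A u p.1 p.2)).card := by
      rw [Finset.card_filter, Fintype.sum_prod_type]
      rfl
    have e2 : m - 1 = (Finset.univ.erase b).card := by
      rw [Finset.card_erase_of_mem (Finset.mem_univ _), Finset.card_univ]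
    rw [e, e2]
    apply Finset.card_le_card_of_injOn
      (fun x => if 4 ≤ dN (delRel A u) a x then (a.1, x.1) else (x.1, b.1))
    · intro x _
      simp only [Finset.coe_filter, Finset.mem_univ, true_and, Set.mem_ofPred_eq]
      split_ifs with h
      · exact um_of_three (by omega)
      · exact um_of_three (by have := hcase x; omega)
    · intro x hx y hy hxy
      have hx : x ≠ b := by simpa using hx
      have hy : y ≠ b := by simpa using hy
      simp only at hxy
      split_ifs at hxy
      · exact Subtype.ext (Prod.ext_iff.1 hxy).2
      · exact absurd (Subtype.ext (Prod.ext_iff.1 hxy).2) hx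
      · exact absurd (Subtype.ext (Prod.ext_iff.1 hxy).2).symm hy
      · exact Subtype.ext (Prod.ext_iff.1 hxy).1
  omega

theorem near {V : Type*} [Fintype V] [DecidableEq V] {A : V → V → Prop}
    (hirr : ∀ x, ¬ A x x) (hA : StrongConn A)
    (h2 : ∀ a b, dN A a b ≤ 2) (u : V)
    (h6 : ∀ a b, dN (delRel A u) a b ≤ 6)
    (hlt : 4 * ∑ a, ∑ b, eF A u a b <
      ∑ x, (eE x u + eN A x u + (eE u x + eN A u x))) :
    ∑ a, ∑ b, dN (delRel A u) a b < ∑ a, ∑ b, dN A a b := by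
  have key : ∀ a b : {x : V // x ≠ u},
      dN (delRel A u) a b ≤ dN A a.1 b.1 + 4 * eF A u a.1 b.1 := by
    intro a b
    rw [dN_eq hirr hA h2]
    by_cases h : 3 ≤ dN (delRel A u) a b
    · have hF := um_of_three h
      have := h6 a b
      have e1 : eF A u a.1 b.1 = 1 := if_pos hF
      have e2 : eE a.1 b.1 = 1 := if_pos hF.1
      have e3 : eN A a.1 b.1 = 1 := if_pos ⟨hF.1, hF.2.1⟩
      omega
    · by_cases hab : a = b
      · subst hab; rw [dN_self]; omega
      · have hab' : a.1 ≠ b.1 := fun h => hab (Subtype.ext h)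
        have e2 : eE a.1 b.1 = 1 := if_pos hab'
        by_cases hadj : A a.1 b.1
        · have := dN_one (A := delRel A u) (u := a) (v := b) hadj
          omega
        · have e3 : eN A a.1 b.1 = 1 := if_pos ⟨hab', hadj⟩
          omega
  have split : ∀ g : V → ℕ, ∑ x, g x = g u + ∑ x : {x : V // x ≠ u}, g x.1 := by
    intro g
    exact Fintype.sum_eq_add_sum_subtype_ne g u
  have hs : ∑ a, ∑ b, dN (delRel A u) a b ≤
      ∑ a : {x : V // x ≠ u}, ∑ b : {x : V // x ≠ u}, dN A a.1 b.1
      + 4 * ∑ a : {x : V // x ≠ u}, ∑ b : {x : V // x ≠ u}, eF A u a.1 b.1 := by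
    rw [Finset.mul_sum, ← Finset.sum_add_distrib]
    apply Finset.sum_le_sum
    intro a _
    rw [Finset.mul_sum, ← Finset.sum_add_distrib]
    exact Finset.sum_le_sum (fun b _ => key a b)
  have hf : ∑ a : {x : V // x ≠ u}, ∑ b : {x : V // x ≠ u}, eF A u a.1 b.1
      ≤ ∑ a, ∑ b, eF A u a b := by
    rw [split (fun a => ∑ b, eF A u a b)]
    refine le_trans ?_ (Nat.le_add_left _ _)
    apply Finset.sum_le_sum
    intro a _
    rw [split]
    exact Nat.le_add_left _ _
  have hW : ∑ a, ∑ b, dN A a b = ∑ x, dN A x u + ∑ x, dN A u x +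
      ∑ a : {x : V // x ≠ u}, ∑ b : {x : V // x ≠ u}, dN A a.1 b.1 := by
    rw [split (fun a => ∑ b, dN A a b), split (fun x => dN A x u), dN_self]
    have : ∑ x : {x : V // x ≠ u}, ∑ b, dN A x.1 b
        = ∑ x : {x : V // x ≠ u}, (dN A x.1 u + ∑ b : {x : V // x ≠ u}, dN A x.1 b.1) :=
      Finset.sum_congr rfl (fun x _ => split _)
    rw [this, Finset.sum_add_distrib]
    ring
  simp only [← dN_eq hirr hA h2] at hlt
  rw [Finset.sum_add_distrib] at hlt
  omega

theorem stmt5 {V : Type*} [Fintype V] [DecidableEq V] (A : V → V → Prop)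
    (hirr : Irreflexive A) (hconn : StrongConn A)
    (hn : 1 < Fintype.card V)
    (hdiam : ∀ u u' : V, u ≠ u' → ddist A u u' ≤ 2) :
    ∃ v : V, ¬ StrongConn (delRel A v) ∨ wiener (delRel A v) < wiener A := by
  have hirr' : ∀ x, ¬ A x x := fun x hx => by
    first
      | exact hirr x hx
      | exact hirr.irrefl x hx
  have h2 : ∀ a b, dN A a b ≤ 2 := by
    intro a b
    by_cases hab : a = b
    · subst hab; rw [dN_self]; omega
    · have := hdiam a b hab
      rw [ddist_eq hconn] at this
      exact_mod_cast this
  have harc : ∃ a b, A a b := by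
    obtain ⟨a, b, hab⟩ := Fintype.one_lt_card_iff.1 hn
    obtain ⟨k, hk⟩ := hconn a b
    cases k with
    | zero => exact absurd hk hab
    | succ k => obtain ⟨w, hw, _⟩ := hk; exact ⟨a, w, hw⟩
  obtain ⟨u, hu⟩ := avg hconn h2 hirr' harc
  refine ⟨u, ?_⟩
  by_cases hsc : StrongConn (delRel A u)
  · right
    rw [wiener_eq hsc, wiener_eq hconn]
    have : ∑ a, ∑ b, dN (delRel A u) a b < ∑ a, ∑ b, dN A a b := by
      apply near hirr' hconn h2 u _ hu
      intro a b
      by_contra h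
      have := far hconn h2 u hsc a b (by omega)
      omega
    exact_mod_cast this
  · exact Or.inl hsc
end

section
/- The circulant digraph D(85, {4}) (arcs i → i−1 and i → i+4 modulo 85) is a Šoltés digraph: for every vertex v, W(D(85,{4})) = W(D(85,{4}) − v), where W is the total directed distance and D − v the induced subdigraph on the remaining 84 vertices. -/
/-- The arc relation of the circulant digraph `D(n,S)`. -/
def circArc (n : ℕ) (S : Set ℕ) : ZMod n → ZMod n → Prop :=
  fun i j => j - i = -1 ∨ ∃ k ∈ S, j - i = (k : ZMod n)

theorem ddist_eq_of_cert {V : Type*} (A : V → V → Prop) (d : V → V → ℕ)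
    (h0 : ∀ u, d u u = 0)
    (h1 : ∀ u w t, A u w → d u t ≤ d w t + 1)
    (h2 : ∀ u t, u ≠ t → ∃ w, A u w ∧ d u t = d w t + 1) (u t : V) :
    ddist A u t = (d u t : ℕ∞) := by
  have lower : ∀ n u, DWalk A n u t → d u t ≤ n := by
    intro n
    induction n with
    | zero =>
      intro u h
      have h' : u = t := h
      subst h'
      simp [h0]
    | succ n ih =>
      rintro u ⟨w, hw, h⟩
      have := ih w h
      have := h1 u w t hw
      omega
  have upper : ∀ n u, d u t = n → DWalk A n u t := by
    intro n
    induction n with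
    | zero =>
      intro u h
      by_contra hne
      obtain ⟨w, -, hw⟩ := h2 u t hne
      omega
    | succ n ih =>
      intro u h
      have hne : u ≠ t := by
        rintro rfl
        rw [h0] at h
        omega
      obtain ⟨w, hA, hw⟩ := h2 u t hne
      exact ⟨w, hA, ih w (by omega)⟩
  apply le_antisymm
  · exact sInf_le ⟨d u t, rfl, upper _ u rfl⟩
  · apply le_sInf
    rintro k ⟨n, rfl, h⟩
    exact_mod_cast lower n u h

/-- Distance in the full digraph as a function of the difference. -/
def fullD (x : ℕ) : ℕ := min (5 * ((x + 3) / 4) - x) (85 - x)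

/-- Distance in the digraph with vertex `0` removed (and `0` if an endpoint is `0`). -/
def delD (u w : ℕ) : ℕ :=
  if u = 0 then 0 else if w = 0 then 0 else
  if u ≤ w then 5 * ((w - u + 3) / 4) - (w - u)
  else min (u - w)
    (5 * ((85 + w - u + 3) / 4) - (85 + w - u) +
      (if (85 + w - u) % 4 = 0 then (if u % 4 = 1 then 5 else 0) else 0))

theorem fullD_check : ∀ x < 85,
    fullD x ≤ fullD ((x + 1) % 85) + 1 ∧ fullD x ≤ fullD ((x + 81) % 85) + 1 ∧
    (x ≠ 0 → fullD x = fullD ((x + 1) % 85) + 1 ∨ fullD x = fullD ((x + 81) % 85) + 1) := by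
  decide +kernel

set_option synthInstance.maxHeartbeats 400000 in
set_option synthInstance.maxSize 4000 in
theorem delD_check : ∀ x < 85, ∀ t < 85, x ≠ 0 → t ≠ 0 →
    ((x + 84) % 85 ≠ 0 → delD x t ≤ delD ((x + 84) % 85) t + 1) ∧
    ((x + 4) % 85 ≠ 0 → delD x t ≤ delD ((x + 4) % 85) t + 1) ∧
    (x ≠ t → ((x + 84) % 85 ≠ 0 ∧ delD x t = delD ((x + 84) % 85) t + 1) ∨
      ((x + 4) % 85 ≠ 0 ∧ delD x t = delD ((x + 4) % 85) t + 1)) := by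
  decide +kernel

theorem sums_check :
    ∑ x ∈ Finset.range 85, ∑ t ∈ Finset.range 85, delD x t =
      85 * ∑ x ∈ Finset.range 85, fullD x := by
  decide +kernel

theorem sum_zmod (F : ℕ → ℕ) : ∑ x : ZMod 85, F x.val = ∑ x ∈ Finset.range 85, F x :=
  Fin.sum_univ_eq_sum_range F 85

theorem circArc_iff (i j : ZMod 85) : circArc 85 {4} i j ↔ j = i + 84 ∨ j = i + 4 := by
  have h : (-1 : ZMod 85) = 84 := by decide
  simp only [circArc, Set.mem_singleton_iff, exists_eq_left, h, sub_eq_iff_eq_add, add_comm i]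
  simp

theorem val_add_const (x : ZMod 85) (c : ℕ) :
    (x + (c : ZMod 85)).val = (x.val + c) % 85 := by
  rw [ZMod.val_add, ZMod.val_natCast]
  simp

theorem ddist_full (u t : ZMod 85) :
    ddist (circArc 85 {4}) u t = (fullD (t - u).val : ℕ∞) := by
  have e1 : ∀ u t : ZMod 85, (t - (u + 84)).val = ((t - u).val + 1) % 85 := by
    intro u t
    rw [← val_add_const]
    congr 1
    have h : (84 : ZMod 85) = -1 := by decide
    rw [h]; push_cast; ring
  have e2 : ∀ u t : ZMod 85, (t - (u + 4)).val = ((t - u).val + 81) % 85 := by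
    intro u t
    rw [← val_add_const]
    congr 1
    have h : ((81 : ℕ) : ZMod 85) = -4 := by decide
    rw [h]; ring
  refine ddist_eq_of_cert _ (fun u t => fullD (t - u).val) ?_ ?_ ?_ u t
  · intro u
    simp [fullD]
  · intro u w t h
    have := fullD_check (t - u).val (ZMod.val_lt _)
    rcases (circArc_iff u w).1 h with rfl | rfl
    · simpa only [e1] using this.1
    · simpa only [e2] using this.2.1
  · intro u t hne
    have := (fullD_check (t - u).val (ZMod.val_lt _)).2.2
      (by rw [Ne, ZMod.val_eq_zero, sub_eq_zero]; exact fun h => hne h.symm)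
    rcases this with h | h
    · exact ⟨u + 84, (circArc_iff _ _).2 (Or.inl rfl), by simpa only [e1] using h⟩
    · exact ⟨u + 4, (circArc_iff _ _).2 (Or.inr rfl), by simpa only [e2] using h⟩

theorem ddist_del (v : ZMod 85) (u t : {x : ZMod 85 // x ≠ v}) :
    ddist (delRel (circArc 85 {4}) v) u t = (delD (u.1 - v).val (t.1 - v).val : ℕ∞) := by
  have e1 : ∀ u : ZMod 85, (u + 84 - v).val = ((u - v).val + 84) % 85 := by
    intro u
    rw [← val_add_const]
    congr 1
    push_cast; ring
  have e2 : ∀ u : ZMod 85, (u + 4 - v).val = ((u - v).val + 4) % 85 := by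
    intro u
    rw [← val_add_const]
    congr 1
    push_cast; ring
  have nz : ∀ u : ZMod 85, (u - v).val ≠ 0 ↔ u ≠ v := by
    intro u
    rw [Ne, ZMod.val_eq_zero, sub_eq_zero]
  have key := fun (u t : {x : ZMod 85 // x ≠ v}) =>
    delD_check (u.1 - v).val (ZMod.val_lt _) (t.1 - v).val (ZMod.val_lt _)
      ((nz _).2 u.2) ((nz _).2 t.2)
  simp only [← e1, ← e2, nz] at key
  refine ddist_eq_of_cert _ (fun u t => delD (u.1 - v).val (t.1 - v).val) ?_ ?_ ?_ u t
  · intro u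
    simp [delD]
  · rintro u ⟨w, hwv⟩ t h
    have := key u t
    rcases (circArc_iff u.1 w).1 h with rfl | rfl
    · exact this.1 hwv
    · exact this.2.1 hwv
  · intro u t hne
    have := (key u t).2.2 (by
      intro h
      apply hne
      have := ZMod.val_injective 85 h
      exact Subtype.ext (sub_left_injective this))
    rcases this with h | h
    · exact ⟨⟨u.1 + 84, h.1⟩, (circArc_iff _ _).2 (Or.inl rfl), h.2⟩
    · exact ⟨⟨u.1 + 4, h.1⟩, (circArc_iff _ _).2 (Or.inr rfl), h.2⟩

theorem sum_del (v : ZMod 85) (F : ℕ → ℕ) (hF : F 0 = 0) :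
    ∑ x : {x : ZMod 85 // x ≠ v}, F (x.1 - v).val = ∑ x ∈ Finset.range 85, F x := by
  rw [← sum_zmod, ← Equiv.sum_comp (Equiv.subRight v) (fun x : ZMod 85 => F x.val)]
  simp only [Equiv.subRight_apply]
  rw [← Finset.sum_subtype (Finset.univ.filter (fun x => x ≠ v)) (by simp)
    (fun x => F (x - v).val)]
  rw [Finset.sum_filter_of_ne]
  intro x _ hx hxv
  apply hx
  simp [hxv, hF]

theorem stmt17 (v : ZMod 85) :
    wiener (delRel (circArc 85 {4}) v) = wiener (circArc 85 {4}) := by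
  have h1 : wiener (circArc 85 {4}) = ((85 * ∑ x ∈ Finset.range 85, fullD x : ℕ) : ℕ∞) := by
    simp only [wiener, ddist_full]
    have : ∀ u : ZMod 85, ∑ w : ZMod 85, fullD (w - u).val = ∑ x ∈ Finset.range 85, fullD x := by
      intro u
      rw [← sum_zmod, ← Equiv.sum_comp (Equiv.subRight u) (fun x : ZMod 85 => fullD x.val)]
      rfl
    simp only [← Nat.cast_sum, this]
    simp [ZMod.card]
  rw [h1, ← sums_check]
  simp only [wiener, ddist_del, ← Nat.cast_sum]
  rw [Nat.cast_inj]
  have : ∀ a, ∑ t : {x : ZMod 85 // x ≠ v}, delD a (t.1 - v).val =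
      ∑ t ∈ Finset.range 85, delD a t := fun a => sum_del v (delD a) (by simp [delD])
  simp only [this]
  exact sum_del v (fun a => ∑ t ∈ Finset.range 85, delD a t) (by simp [delD])
end
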